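/- Let n ≥ 1 and m ≥ 1 be integers, let 0 < α_i < n and 1 < p_i < n/α_i for i = 1,…,m, set α = α_1 + ⋯ + α_m, and define q by 1/q = 1/p_1 + ⋯ + 1/p_m − α/n, assuming 1/q < 1. Then there exists a constant C > 0 such that for all f_i ∈ L^{p_i}(ℝ^n), i = 1,…,m, one has ‖I_{α,m}(f_1,…,f_m)‖_{L^q(ℝ^n)} ≤ C ∏_{i=1}^m ‖f_i‖_{L^{p_i}(ℝ^n)}. -/

import Mathlib

/-!
Since every `α i - n` is negative, the kernel `(∑ |x - y_i|)^(α - mn)` is at most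
`∏ |x - y_i|^(α i - n)`, so `|I_{α,m}(f)|` is bounded pointwise by the product of the linear
fractional integrals `I_{α i}|f i|` (`enorm_multIFrac_le`). With `1 / q i = 1 / p i - α i / n > 0`
one has `∑ 1 / q i = 1 / q`, and Hölder's inequality for `m` functions reduces the claim to the
linear Hardy–Littlewood–Sobolev inequality `‖I_α f‖_q ≤ C ‖f‖_p` (`hls`).

That inequality is proved by Hedberg's method. Writing the kernel as an integral over radii
expresses `I_α f(x)` through the integrals of `f` over the balls `B(x, r)`. These are bounded by
`C r^n Mf(x)`, with `M` the maximal function, and by `C r^(n - n/p) ‖f‖_p`; using the first bound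
for `r ≤ R`, the second for `r > R`, and the balancing `R = (‖f‖_p / Mf(x))^(p/n)` gives
`I_α f ≤ C (Mf)^(p/q) ‖f‖_p^(1 - p/q)` (`hedberg`). It remains to know that `M` is bounded on
`L^p` (`strong_type`), which follows from its weak (1,1) bound (`weak_type`, by Vitali's covering
lemma) and the layer-cake formula.
-/

open MeasureTheory Metric ENNReal

/-- The multilinear fractional integral operator `I_{α,m}` on `ℝⁿ`. -/
noncomputable def multIFrac (n m : ℕ) (α : ℝ)
    (f : Fin m → EuclideanSpace ℝ (Fin n) → ℝ) (x : EuclideanSpace ℝ (Fin n)) : ℝ :=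
  ∫ y : Fin m → EuclideanSpace ℝ (Fin n),
    (∏ i, f i (y i)) * (∑ i, dist x (y i)) ^ (α - (m : ℝ) * (n : ℝ))

open Set

/-! ### Integrals of powers -/

lemma lintegral_Ioc_zero_rpow {s : ℝ} (hs : 0 < s) {a : ℝ} (ha : 0 ≤ a) :
    ∫⁻ t in Ioc 0 a, ENNReal.ofReal (t ^ (s - 1)) = ENNReal.ofReal (a ^ s / s) := by
  rw [← ofReal_integral_eq_lintegral_ofReal, ← intervalIntegral.integral_of_le ha,
    integral_rpow (Or.inl (by linarith))]
  · simp [Real.zero_rpow hs.ne']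
  · exact (intervalIntegrable_iff_integrableOn_Ioc_of_le ha).1
      (intervalIntegral.intervalIntegrable_rpow' (by linarith))
  · filter_upwards [ae_restrict_mem measurableSet_Ioc] with t ht
    exact Real.rpow_nonneg ht.1.le _

lemma lintegral_Ioi_rpow_neg {s : ℝ} (hs : 0 < s) {a : ℝ} (ha : 0 < a) :
    ∫⁻ t in Ioi a, ENNReal.ofReal (t ^ (-s - 1)) = ENNReal.ofReal (a ^ (-s) / s) := by
  rw [← ofReal_integral_eq_lintegral_ofReal (integrableOn_Ioi_rpow_of_lt (by linarith) ha),
    integral_Ioi_rpow_of_lt (by linarith) ha]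
  · simp [neg_div_neg_eq]
  · filter_upwards [ae_restrict_mem measurableSet_Ioi] with t ht
    exact Real.rpow_nonneg (ha.le.trans ht.le) _

/-- Layer-cake identity `aˢ = s ∫₀^∞ 1_{t < a} tˢ⁻¹ dt`, with `a = ∞` allowed. -/
lemma lintegral_layer {s : ℝ} (hs : 0 < s) (a : ℝ≥0∞) :
    ∫⁻ t in Ioi (0 : ℝ), {t : ℝ | ENNReal.ofReal t < a}.indicator
      (fun t => ENNReal.ofReal (t ^ (s - 1))) t = a ^ s / ENNReal.ofReal s := by
  have hm : MeasurableSet {t : ℝ | ENNReal.ofReal t < a} :=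
    measurableSet_lt (by fun_prop) measurable_const
  rw [setLIntegral_indicator hm]
  by_cases ha : a = ⊤
  · subst ha
    have h1 : {t : ℝ | ENNReal.ofReal t < ⊤} ∩ Ioi 0 = Ioi 0 := by ext; simp
    rw [h1, ENNReal.top_rpow_of_pos hs, ENNReal.top_div_of_ne_top (by simp)]
    refine ENNReal.eq_top_of_forall_nnreal_le fun r => ?_
    have hx : 0 ≤ (s * r : ℝ) := by positivity
    calc (r : ℝ≥0∞) = ENNReal.ofReal (((s * r : ℝ) ^ (1 / s)) ^ s / s) := by
          rw [← Real.rpow_mul hx, one_div_mul_cancel hs.ne', Real.rpow_one,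
            mul_div_cancel_left₀ _ hs.ne']; simp
      _ = _ := (lintegral_Ioc_zero_rpow hs (by positivity)).symm
      _ ≤ _ := lintegral_mono_set Ioc_subset_Ioi_self
  · lift a to NNReal using ha
    have h1 : {t : ℝ | ENNReal.ofReal t < a} ∩ Ioi 0 = Ioo 0 (a : ℝ) := by
      ext t
      refine ⟨fun h => ⟨h.2, ?_⟩, fun h => ⟨?_, h.1⟩⟩
      · exact (ENNReal.ofReal_lt_coe_iff h.2.le).1 h.1
      · exact (ENNReal.ofReal_lt_coe_iff h.1.le).2 h.2
    rw [h1, setLIntegral_congr Ioo_ae_eq_Ioc, ← NNReal.val_eq_coe,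
      lintegral_Ioc_zero_rpow hs a.2,
      ENNReal.ofReal_div_of_pos hs, ← ENNReal.ofReal_rpow_of_nonneg a.2 hs.le]
    simp

/-! ### The maximal function -/

/-- The centred Hardy–Littlewood maximal function of a nonnegative function, restricted to the
radii `2 ^ j`, `j : ℤ`. Countably many radii make measurability immediate, and by doubling they
lose only a factor `2 ^ n` against the supremum over all radii. -/
noncomputable def dyMax (n : ℕ) (f : EuclideanSpace ℝ (Fin n) → ℝ≥0∞)
    (x : EuclideanSpace ℝ (Fin n)) : ℝ≥0∞ :=
  ⨆ j : ℤ, (∫⁻ y in closedBall x ((2 : ℝ) ^ j), f y) / volume (closedBall x ((2 : ℝ) ^ j))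

lemma volume_closedBall_mul (n : ℕ) (x : EuclideanSpace ℝ (Fin n)) {r : ℝ} (hr : 0 ≤ r) :
    volume (closedBall x r) =
      ENNReal.ofReal (r ^ n) * volume (ball (0 : EuclideanSpace ℝ (Fin n)) 1) := by
  simpa using Measure.addHaar_closedBall volume x hr

lemma measurable_ballIntegral {n : ℕ} {f : EuclideanSpace ℝ (Fin n) → ℝ≥0∞}
    (hf : Measurable f) :
    Measurable (fun z : EuclideanSpace ℝ (Fin n) × ℝ => ∫⁻ y in closedBall z.1 z.2, f y) := by
  have : (fun z : EuclideanSpace ℝ (Fin n) × ℝ => ∫⁻ y in closedBall z.1 z.2, f y) =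
      fun z => ∫⁻ y, {w : (EuclideanSpace ℝ (Fin n) × ℝ) × EuclideanSpace ℝ (Fin n) |
        dist w.2 w.1.1 ≤ w.1.2}.indicator (fun w => f w.2) (z, y) := by
    ext z
    rw [← lintegral_indicator measurableSet_closedBall]
    rfl
  rw [this]
  apply Measurable.lintegral_prod_right
  exact (hf.comp measurable_snd).indicator
    (measurableSet_le (by fun_prop) (by fun_prop))

lemma measurable_dyMax {n : ℕ} {f : EuclideanSpace ℝ (Fin n) → ℝ≥0∞}
    (hf : Measurable f) : Measurable (dyMax n f) := by
  refine Measurable.iSup fun j => ?_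
  have h := (measurable_ballIntegral hf).comp
    (measurable_id.prodMk (measurable_const (a := (2 : ℝ) ^ j)))
  refine Measurable.div h ?_
  simp_rw [volume_closedBall_mul n _ (show (0 : ℝ) ≤ 2 ^ j by positivity)]
  exact measurable_const

/-- Weak type (1,1) of the maximal function. Vitali's covering lemma extracts, from balls on which
the average of `f` exceeds `t`, a disjoint family whose five-fold enlargements cover
`{Mf > t}`. -/
lemma weak_type (n : ℕ) (hn : 1 ≤ n) (f : EuclideanSpace ℝ (Fin n) → ℝ≥0∞) {t : ℝ≥0∞}
    (ht : 0 < t) (ht' : t ≠ ⊤) :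
    t * volume {x | t < dyMax n f x} ≤ 5 ^ n * ∫⁻ y, f y := by
  by_cases hF : ∫⁻ y, f y = ⊤
  · rw [hF, ENNReal.mul_top (by simp)]; exact le_top
  set V := volume (ball (0 : EuclideanSpace ℝ (Fin n)) 1) with hV
  have hV0 : V ≠ 0 := (measure_ball_pos _ _ one_pos).ne'
  have hVt : V ≠ ⊤ := measure_ball_lt_top.ne
  set E := {x | t < dyMax n f x} with hE
  have hex : ∀ x : EuclideanSpace ℝ (Fin n), ∃ j : ℤ, x ∈ E →
      t * volume (closedBall x ((2 : ℝ) ^ j)) ≤ ∫⁻ y in closedBall x ((2 : ℝ) ^ j), f y := by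
    intro x
    by_cases hx : x ∈ E
    · obtain ⟨j, hj⟩ := lt_iSup_iff.1 (show t < dyMax n f x from hx)
      refine ⟨j, fun _ => ?_⟩
      rw [ENNReal.lt_div_iff_mul_lt] at hj
      · exact hj.le
      · exact Or.inl (measure_closedBall_pos _ _ (by positivity)).ne'
      · exact Or.inl measure_closedBall_lt_top.ne
    · exact ⟨0, fun h => absurd h hx⟩
  choose j hj using hex
  -- the radii of the selected balls are bounded because `f` is integrable
  have hR : ∀ x ∈ E, (2 : ℝ) ^ j x ≤ max 1 ((∫⁻ y, f y) / (t * V)).toReal := by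
    intro x hx
    by_cases h1 : (2 : ℝ) ^ j x ≤ 1
    · exact h1.trans (le_max_left _ _)
    · refine le_trans ?_ (le_max_right _ _)
      push Not at h1
      have h2 := (hj x hx).trans (setLIntegral_le_lintegral _ _)
      rw [volume_closedBall_mul n x (by positivity), mul_left_comm] at h2
      rw [← ENNReal.ofReal_le_iff_le_toReal
        (ENNReal.div_ne_top hF (mul_ne_zero ht.ne' hV0)),
        ENNReal.le_div_iff_mul_le (Or.inl (mul_ne_zero ht.ne' hV0))
          (Or.inl (ENNReal.mul_ne_top ht' hVt))]
      refine le_trans ?_ h2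
      gcongr
      exact le_self_pow₀ h1.le (by omega)
  obtain ⟨u, huE, hdisj, hcov⟩ := Vitali.exists_disjoint_subfamily_covering_enlargement_closedBall
    E (fun x => x) (fun x => (2 : ℝ) ^ j x) _ hR 5 (by norm_num)
  have hcount : u.Countable := hdisj.countable_of_nonempty_interior fun x _ => by
    refine ⟨x, ball_subset_interior_closedBall (mem_ball_self (by positivity))⟩
  have hEsub : E ⊆ ⋃ x ∈ u, closedBall x (5 * (2 : ℝ) ^ j x) := by
    intro x hx
    obtain ⟨b, hb, hsub⟩ := hcov x hx
    exact mem_biUnion hb (hsub (mem_closedBall_self (by positivity)))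
  have hcu : Countable u := hcount.to_subtype
  calc t * volume E ≤ t * ∑' x : u, volume (closedBall (x : EuclideanSpace ℝ (Fin n))
          (5 * (2 : ℝ) ^ j x)) := by
        gcongr
        exact (measure_mono hEsub).trans (measure_biUnion_le _ hcount _)
    _ = 5 ^ n * ∑' x : u, t * volume (closedBall (x : EuclideanSpace ℝ (Fin n))
          ((2 : ℝ) ^ j x)) := by
        rw [← ENNReal.tsum_mul_left, ← ENNReal.tsum_mul_left]
        congr 1; ext x
        rw [volume_closedBall_mul n _ (by positivity), volume_closedBall_mul n _ (by positivity),
          mul_pow, ENNReal.ofReal_mul (by positivity), ENNReal.ofReal_pow (by positivity)]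
        simp only [ENNReal.ofReal_ofNat]
        ring
    _ ≤ 5 ^ n * ∑' x : u, ∫⁻ y in closedBall (x : EuclideanSpace ℝ (Fin n))
          ((2 : ℝ) ^ j x), f y := by
        gcongr with x
        exact hj x (huE x.2)
    _ = 5 ^ n * ∫⁻ y in ⋃ x ∈ u, closedBall x ((2 : ℝ) ^ j x), f y := by
        rw [lintegral_biUnion hcount (fun _ _ => measurableSet_closedBall) hdisj]
    _ ≤ _ := by gcongr; exact Measure.restrict_le_self

/-- Strong type (p,p) of the maximal function for `p > 1`: the Marcinkiewicz argument, applying the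
weak (1,1) bound at level `t / 2` to the part of `f` above `t / 2` and integrating over `t`. -/
lemma strong_type (n : ℕ) (hn : 1 ≤ n) {p : ℝ} (hp : 1 < p) :
    ∃ C : NNReal, ∀ f : EuclideanSpace ℝ (Fin n) → ℝ≥0∞, Measurable f →
      ∫⁻ x, dyMax n f x ^ p ≤ C * ∫⁻ y, f y ^ p := by
  refine ⟨Real.toNNReal p * (2 * 5 ^ n) * (2 ^ (p - 1) / Real.toNNReal (p - 1)), fun f hf => ?_⟩
  have hM := measurable_dyMax hf
  have hp0 : 0 < p := by linarith
  have hp1 : 0 < p - 1 := by linarith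
  -- truncation of `f` at height `t / 2`
  have htr : ∀ t : ℝ, 0 < t → volume {x | ENNReal.ofReal t < dyMax n f x} ≤
      2 * 5 ^ n * ENNReal.ofReal (t ^ (-1 : ℝ)) *
        ∫⁻ y, {y | ENNReal.ofReal t < 2 * f y}.indicator f y := by
    intro t ht
    set g := {y | ENNReal.ofReal t < 2 * f y}.indicator f
    have ht2 : (0 : ℝ≥0∞) < ENNReal.ofReal (t / 2) := by simpa using ht
    have hhalf : ENNReal.ofReal t = ENNReal.ofReal (t / 2) + ENNReal.ofReal (t / 2) := by
      rw [← ENNReal.ofReal_add (by positivity) (by positivity), add_halves]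
    have hfg : ∀ y, f y ≤ g y + ENNReal.ofReal (t / 2) := by
      intro y
      by_cases hy : ENNReal.ofReal t < 2 * f y
      · simp [g, hy]
      · simp only [g, indicator, mem_ofPred_eq, hy, if_false, zero_add]
        rw [not_lt, hhalf, ← two_mul] at hy
        exact (ENNReal.mul_le_mul_iff_right (by simp) (by simp)).1 hy
    have hMg : ∀ x, dyMax n f x ≤ dyMax n g x + ENNReal.ofReal (t / 2) := by
      intro x
      refine iSup_le fun j => ?_
      have hv0 : volume (closedBall x ((2 : ℝ) ^ j)) ≠ 0 :=
        (measure_closedBall_pos _ _ (by positivity)).ne'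
      have hvt : volume (closedBall x ((2 : ℝ) ^ j)) ≠ ⊤ := measure_closedBall_lt_top.ne
      calc _ ≤ (∫⁻ y in closedBall x ((2 : ℝ) ^ j), (g y + ENNReal.ofReal (t / 2))) /
            volume (closedBall x ((2 : ℝ) ^ j)) := by gcongr; exact hfg _
        _ = (∫⁻ y in closedBall x ((2 : ℝ) ^ j), g y) / volume (closedBall x ((2 : ℝ) ^ j)) +
            ENNReal.ofReal (t / 2) := by
          rw [lintegral_add_right _ measurable_const, setLIntegral_const, ENNReal.add_div,
            ENNReal.mul_div_cancel_right hv0 hvt]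
        _ ≤ _ := by gcongr; exact le_iSup (fun j : ℤ => (∫⁻ y in closedBall x ((2 : ℝ) ^ j), g y) /
            volume (closedBall x ((2 : ℝ) ^ j))) j
    have hsub : {x | ENNReal.ofReal t < dyMax n f x} ⊆
        {x | ENNReal.ofReal (t / 2) < dyMax n g x} := by
      intro x hx
      have := lt_of_lt_of_le (show ENNReal.ofReal t < dyMax n f x from hx) (hMg x)
      rw [hhalf] at this
      exact lt_of_add_lt_add_right this
    have hw := weak_type n hn g ht2 (by simp)
    have hmul : 2 * ENNReal.ofReal (t ^ (-1 : ℝ)) * ENNReal.ofReal (t / 2) = 1 := by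
      rw [show (2 : ℝ≥0∞) = ENNReal.ofReal 2 by simp, ← ENNReal.ofReal_mul (by positivity),
        ← ENNReal.ofReal_mul (by positivity), Real.rpow_neg_one, ← ENNReal.ofReal_one]
      congr 1; field_simp
    calc _ ≤ volume {x | ENNReal.ofReal (t / 2) < dyMax n g x} := measure_mono hsub
      _ = 2 * ENNReal.ofReal (t ^ (-1 : ℝ)) * (ENNReal.ofReal (t / 2) *
          volume {x | ENNReal.ofReal (t / 2) < dyMax n g x}) := by
        rw [← mul_assoc, hmul, one_mul]
      _ ≤ 2 * ENNReal.ofReal (t ^ (-1 : ℝ)) * (5 ^ n * ∫⁻ y, g y) := by gcongr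
      _ = _ := by ring
  have hlayer : ∀ {s : ℝ} (_ : 0 < s) (a : ℝ≥0∞), a ^ s = ENNReal.ofReal s *
      ∫⁻ t in Ioi (0 : ℝ), {t : ℝ | ENNReal.ofReal t < a}.indicator
      (fun t => ENNReal.ofReal (t ^ (s - 1))) t := by
    intro s hs a
    rw [lintegral_layer hs, ENNReal.mul_div_cancel (by simpa using hs) (by simp)]
  calc ∫⁻ x, dyMax n f x ^ p
      = ENNReal.ofReal p * ∫⁻ x, ∫⁻ t in Ioi (0 : ℝ),
            {t : ℝ | ENNReal.ofReal t < dyMax n f x}.indicator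
              (fun t => ENNReal.ofReal (t ^ (p - 1))) t := by
        simp_rw [hlayer hp0]
        rw [lintegral_const_mul']
        simp
    _ = ENNReal.ofReal p * ∫⁻ t in Ioi (0 : ℝ), ∫⁻ x,
            {t : ℝ | ENNReal.ofReal t < dyMax n f x}.indicator
              (fun t => ENNReal.ofReal (t ^ (p - 1))) t := by
        rw [lintegral_lintegral_swap]
        apply Measurable.aemeasurable
        exact (show Measurable fun z : EuclideanSpace ℝ (Fin n) × ℝ => ENNReal.ofReal (z.2 ^ (p - 1))
          by fun_prop).indicator
          (s := {z : EuclideanSpace ℝ (Fin n) × ℝ | ENNReal.ofReal z.2 < dyMax n f z.1})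
          (measurableSet_lt (by fun_prop) (by fun_prop))
    _ ≤ ENNReal.ofReal p * ∫⁻ t in Ioi (0 : ℝ), (2 * 5 ^ n) * ∫⁻ y,
          f y * {t : ℝ | ENNReal.ofReal t < 2 * f y}.indicator
            (fun t => ENNReal.ofReal (t ^ (p - 1 - 1))) t := by
        gcongr ENNReal.ofReal p * ?_
        refine setLIntegral_mono' measurableSet_Ioi fun t (ht : 0 < t) => ?_
        calc _ = ENNReal.ofReal (t ^ (p - 1)) * volume {x | ENNReal.ofReal t < dyMax n f x} := by
              rw [← setLIntegral_const, ← lintegral_indicator (measurableSet_lt measurable_const hM)]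
              rfl
          _ ≤ ENNReal.ofReal (t ^ (p - 1)) * (2 * 5 ^ n * ENNReal.ofReal (t ^ (-1 : ℝ)) *
              ∫⁻ y, {y | ENNReal.ofReal t < 2 * f y}.indicator f y) := by
            gcongr; exact htr t ht
          _ = (2 * 5 ^ n) * (ENNReal.ofReal (t ^ (p - 1 - 1)) *
              ∫⁻ y, {y | ENNReal.ofReal t < 2 * f y}.indicator f y) := by
            rw [sub_eq_add_neg (p - 1) 1, Real.rpow_add ht, ENNReal.ofReal_mul (by positivity)]
            ring
          _ = _ := by
            rw [← lintegral_const_mul' _ _ (by simp)]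
            congr 2; ext y
            by_cases h : ENNReal.ofReal t < 2 * f y <;> simp [indicator, mul_comm]
    _ = ENNReal.ofReal p * (2 * 5 ^ n) * ∫⁻ y, ∫⁻ t in Ioi (0 : ℝ),
          f y * {t : ℝ | ENNReal.ofReal t < 2 * f y}.indicator
            (fun t => ENNReal.ofReal (t ^ (p - 1 - 1))) t := by
        rw [lintegral_const_mul' _ _ (by finiteness), ← mul_assoc, lintegral_lintegral_swap]
        apply Measurable.aemeasurable
        refine (show Measurable fun z : ℝ × EuclideanSpace ℝ (Fin n) => f z.2 by fun_prop).mul ?_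
        exact (show Measurable fun z : ℝ × EuclideanSpace ℝ (Fin n) =>
          ENNReal.ofReal (z.1 ^ (p - 1 - 1)) by fun_prop).indicator
          (s := {z : ℝ × EuclideanSpace ℝ (Fin n) | ENNReal.ofReal z.1 < 2 * f z.2})
          (measurableSet_lt (by fun_prop) (by fun_prop))
    _ = ENNReal.ofReal p * (2 * 5 ^ n) * ∫⁻ y, (2 ^ (p - 1) / ENNReal.ofReal (p - 1)) * f y ^ p := by
        congr 2; ext y
        rw [lintegral_const_mul _ ((show Measurable fun t : ℝ => ENNReal.ofReal (t ^ (p - 1 - 1)) by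
          fun_prop).indicator (measurableSet_lt (by fun_prop) (by fun_prop))), lintegral_layer hp1,
          ENNReal.mul_rpow_of_nonneg _ _ hp1.le]
        have : f y ^ p = f y * f y ^ (p - 1) := by
          conv_rhs => rw [← ENNReal.rpow_one (f y), ← ENNReal.rpow_mul, one_mul]
          rw [← ENNReal.rpow_add_of_nonneg _ _ zero_le_one hp1.le]; congr 1; ring
        rw [this, div_eq_mul_inv, div_eq_mul_inv]; ring
    _ = _ := by
        rw [lintegral_const_mul _ (by fun_prop), ← mul_assoc]
        congr 1
        rw [ENNReal.coe_mul, ENNReal.coe_mul, ENNReal.coe_div (by simpa using hp),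
          ENNReal.coe_rpow_of_nonneg _ hp1.le]
        push_cast
        rfl

/-! ### The linear fractional integral -/

/-- The fractional integral `∫ f(y) |x - y|^(α - n) dy` of a nonnegative function. The power is
taken in `ℝ≥0∞`, so for `α < n` the kernel is `∞` on the diagonal. -/
noncomputable def rieszPot (n : ℕ) (α : ℝ) (f : EuclideanSpace ℝ (Fin n) → ℝ≥0∞)
    (x : EuclideanSpace ℝ (Fin n)) : ℝ≥0∞ :=
  ∫⁻ y, f y * ENNReal.ofReal (dist x y) ^ (α - n)

lemma measurable_rieszPot {n : ℕ} (α : ℝ) {f : EuclideanSpace ℝ (Fin n) → ℝ≥0∞}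
    (hf : Measurable f) : Measurable (rieszPot n α f) := by
  have h : Measurable (fun z : EuclideanSpace ℝ (Fin n) × EuclideanSpace ℝ (Fin n) =>
      f z.2 * ENNReal.ofReal (dist z.1 z.2) ^ (α - n)) := by fun_prop
  exact h.lintegral_prod_right

/-- The fractional integral as a superposition of integrals over balls, from
`|x - y|^(α - n) = (n - α) ∫_{|x - y|}^∞ r^(α - n - 1) dr`. -/
lemma rieszPot_le_lintegral_balls {n : ℕ} (hn : 1 ≤ n) {α : ℝ} (hα : α < n)
    {f : EuclideanSpace ℝ (Fin n) → ℝ≥0∞} (hf : Measurable f) (x : EuclideanSpace ℝ (Fin n)) :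
    rieszPot n α f x ≤ ENNReal.ofReal (n - α) * ∫⁻ r in Ioi (0 : ℝ),
      ENNReal.ofReal (r ^ (α - n - 1)) * ∫⁻ y in closedBall x r, f y := by
  have hβ : 0 < n - α := by linarith
  have : Nonempty (Fin n) := ⟨⟨0, hn⟩⟩
  have hne : ∀ᵐ y : EuclideanSpace ℝ (Fin n), y ≠ x := by
    simp [ae_iff]
  have hind : Measurable (fun z : EuclideanSpace ℝ (Fin n) × ℝ => f z.1 *
      {z : EuclideanSpace ℝ (Fin n) × ℝ | dist z.1 x ≤ z.2}.indicator
        (fun z => ENNReal.ofReal (z.2 ^ (α - n - 1))) z) := by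
    refine Measurable.mul (by fun_prop) (Measurable.indicator (by fun_prop) ?_)
    exact measurableSet_le (by fun_prop) (by fun_prop)
  calc rieszPot n α f x
      ≤ ∫⁻ y, ENNReal.ofReal (n - α) * ∫⁻ r in Ioi (0 : ℝ), f y *
        {z : EuclideanSpace ℝ (Fin n) × ℝ | dist z.1 x ≤ z.2}.indicator
          (fun z => ENNReal.ofReal (z.2 ^ (α - n - 1))) (y, r) := by
        refine lintegral_mono_ae ?_
        filter_upwards [hne] with y hy
        have hd : 0 < dist y x := dist_pos.2 hy
        have h1 := lintegral_Ioi_rpow_neg hβ hd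
        rw [neg_sub, ENNReal.ofReal_div_of_pos hβ, ENNReal.eq_div_iff (by simpa using hα) (by simp),
          ← ENNReal.ofReal_rpow_of_pos hd] at h1
        rw [dist_comm x y, ← h1, mul_left_comm, ← lintegral_const_mul _ (by fun_prop)]
        gcongr ENNReal.ofReal _ * ?_
        refine (lintegral_mono_ae ?_).trans (lintegral_mono_set (Ioi_subset_Ioi hd.le))
        filter_upwards [ae_restrict_mem measurableSet_Ioi] with r hr
        rw [indicator_of_mem]
        exact (show dist y x < r from hr).le
    _ = ENNReal.ofReal (n - α) * ∫⁻ r in Ioi (0 : ℝ), ∫⁻ y, f y *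
        {z : EuclideanSpace ℝ (Fin n) × ℝ | dist z.1 x ≤ z.2}.indicator
          (fun z => ENNReal.ofReal (z.2 ^ (α - n - 1))) (y, r) := by
        rw [lintegral_const_mul' _ _ (by simp), lintegral_lintegral_swap hind.aemeasurable]
    _ = _ := by
        congr 2; ext r
        rw [← lintegral_const_mul _ hf, ← lintegral_indicator measurableSet_closedBall]
        congr 1; ext y
        by_cases h : dist y x ≤ r <;> simp [indicator, h, mul_comm]

lemma ballIntegral_le_dyMax (n : ℕ) (f : EuclideanSpace ℝ (Fin n) → ℝ≥0∞)
    (x : EuclideanSpace ℝ (Fin n)) {r : ℝ} (hr : 0 < r) :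
    ∫⁻ y in closedBall x r, f y ≤ ENNReal.ofReal
      (2 ^ n * volume.real (ball (0 : EuclideanSpace ℝ (Fin n)) 1) * r ^ (n : ℝ)) * dyMax n f x := by
  obtain ⟨j, hj1, hj2⟩ := exists_mem_Ioc_zpow hr (one_lt_two : (1 : ℝ) < 2)
  set s := (2 : ℝ) ^ (j + 1)
  have hs : 0 < s := by positivity
  have hs2 : s ≤ 2 * r := by
    simp only [s]; rw [zpow_add_one₀ two_ne_zero]; linarith
  have hv0 : volume (closedBall x s) ≠ 0 := (measure_closedBall_pos _ _ hs).ne'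
  have hvt : volume (closedBall x s) ≠ ⊤ := measure_closedBall_lt_top.ne
  calc ∫⁻ y in closedBall x r, f y ≤ ∫⁻ y in closedBall x s, f y :=
        lintegral_mono_set (closedBall_subset_closedBall hj2)
    _ = volume (closedBall x s) * ((∫⁻ y in closedBall x s, f y) / volume (closedBall x s)) := by
        rw [ENNReal.mul_div_cancel hv0 hvt]
    _ ≤ volume (closedBall x s) * dyMax n f x := by
        gcongr
        exact le_iSup (fun j : ℤ => (∫⁻ y in closedBall x ((2 : ℝ) ^ j), f y) /
            volume (closedBall x ((2 : ℝ) ^ j))) (j + 1)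
    _ ≤ _ := by
        gcongr
        rw [volume_closedBall_mul n x hs.le, ← ofReal_measureReal measure_ball_lt_top.ne,
          ← ENNReal.ofReal_mul (by positivity)]
        apply ENNReal.ofReal_le_ofReal
        calc _ ≤ (2 * r) ^ n * volume.real (ball (0 : EuclideanSpace ℝ (Fin n)) 1) := by gcongr
          _ = _ := by rw [Real.rpow_natCast]; ring

/-- Hölder's inequality on a ball: `∫_{B(x,r)} f ≤ |B(x,r)|^(1 - 1/p) ‖f‖_p`. -/
lemma ballIntegral_le_Lp (n : ℕ) {p : ℝ} (hp : 1 < p) {f : EuclideanSpace ℝ (Fin n) → ℝ≥0∞}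
    (hf : Measurable f) (x : EuclideanSpace ℝ (Fin n)) {r : ℝ} (hr : 0 < r) :
    ∫⁻ y in closedBall x r, f y ≤ ENNReal.ofReal
      (volume.real (ball (0 : EuclideanSpace ℝ (Fin n)) 1) ^ (1 - 1 / p) * r ^ (n - n / p)) *
        (∫⁻ y, f y ^ p) ^ (1 / p) := by
  have hp0 : 0 < p := by linarith
  have h := ENNReal.lintegral_mul_le_Lp_mul_Lq (volume.restrict (closedBall x r))
    (Real.HolderConjugate.conjExponent hp) hf.aemeasurable (aemeasurable_const (b := 1))
  have he : 1 / p.conjExponent = 1 - 1 / p := by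
    rw [Real.conjExponent]; field_simp
  have he0 : 0 ≤ 1 - 1 / p := by
    rw [sub_nonneg, div_le_one hp0]; exact hp.le
  simp only [Pi.mul_apply, mul_one, ENNReal.one_rpow, lintegral_const, one_mul, he,
    Measure.restrict_apply_univ] at h
  refine h.trans ?_
  rw [mul_comm]
  refine mul_le_mul' (le_of_eq ?_) ?_
  · rw [volume_closedBall_mul n x hr.le, ← ofReal_measureReal measure_ball_lt_top.ne,
      ← ENNReal.ofReal_mul (by positivity), ENNReal.ofReal_rpow_of_nonneg (by positivity) he0,
      Real.mul_rpow (by positivity) (by positivity), ← Real.rpow_natCast, ← Real.rpow_mul hr.le,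
      mul_comm]
    congr 3; ring
  · gcongr
    exact Measure.restrict_le_self

/-- Hedberg's pointwise inequality `I_α f ≤ C (Mf)^(1 - αp/n) ‖f‖_p^(αp/n)`: small balls are
estimated by the maximal function, large ones by Hölder's inequality. -/
lemma hedberg {n : ℕ} (hn : 1 ≤ n) {α p : ℝ} (hα : 0 < α) (hαn : α < n) (hp : 1 < p)
    (hpα : p < n / α) :
    ∃ C : NNReal, ∀ f : EuclideanSpace ℝ (Fin n) → ℝ≥0∞, Measurable f →
      ∫⁻ y, f y ^ p < ⊤ → ∀ x, rieszPot n α f x ≤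
        C * (dyMax n f x ^ (1 - α * p / n) * ((∫⁻ y, f y ^ p) ^ (1 / p)) ^ (α * p / n)) := by
  set V := volume.real (ball (0 : EuclideanSpace ℝ (Fin n)) 1)
  have hV : 0 ≤ V := measureReal_nonneg
  have hn0 : (0 : ℝ) < n := by exact_mod_cast hn
  have hp0 : 0 < p := by linarith
  have hap : α * p < n := by rwa [lt_div_iff₀ hα, mul_comm] at hpα
  have hδ : 0 < n / p - α := by rw [sub_pos, lt_div_iff₀ hp0]; exact hap
  have hθ : 0 < 1 - α * p / n := by rw [sub_pos, div_lt_one hn0]; exact hap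
  have hθ' : 0 < α * p / n := by positivity
  set K := (n - α) * (2 ^ n * V / α + V ^ (1 - 1 / p) / (n / p - α)) with hK
  have hβ : 0 < n - α := by linarith
  have hK0 : 0 ≤ K := by positivity
  -- the constant must be nonzero for the case `Mf x = ∞`
  refine ⟨K.toNNReal + 1, fun f hf hfin x => ?_⟩
  set N := (∫⁻ y, f y ^ p) ^ (1 / p) with hN
  have hNt : N ≠ ⊤ := ENNReal.rpow_ne_top_of_nonneg (by positivity) hfin.ne
  set M := dyMax n f x with hM
  have hT := rieszPot_le_lintegral_balls hn hαn hf x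
  have hF1 := fun {r : ℝ} (hr : 0 < r) => ballIntegral_le_dyMax n f x hr
  have hF2 := fun {r : ℝ} (hr : 0 < r) => ballIntegral_le_Lp n hp hf x hr
  have hzero : (∀ r : ℝ, 0 < r → ∫⁻ y in closedBall x r, f y = 0) → rieszPot n α f x = 0 := by
    intro h
    refine le_antisymm (hT.trans (le_of_eq ?_)) (by simp)
    rw [setLIntegral_congr_fun measurableSet_Ioi (g := fun _ => 0)]
    · simp
    · intro r hr; simp [h r hr]
  by_cases hN0 : N = 0
  · rw [hzero fun r hr => ?_]
    · simp
    · have h := hF2 hr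
      rw [← hN, hN0, mul_zero] at h
      exact le_antisymm h (by simp)
  by_cases hM0 : M = 0
  · rw [hzero fun r hr => ?_]
    · simp
    · simpa [← hM, hM0] using hF1 hr
  by_cases hMt : M = ⊤
  · rw [hMt, ENNReal.top_rpow_of_pos hθ, ENNReal.top_mul, ENNReal.mul_top]
    · exact le_top
    · simp
    · simp [ENNReal.rpow_eq_zero_iff, hN0, hNt]
  set a := M.toReal
  set b := N.toReal
  have ha : 0 < a := ENNReal.toReal_pos hM0 hMt
  have hb : 0 < b := ENNReal.toReal_pos hN0 hNt
  have hMa : M = ENNReal.ofReal a := (ENNReal.ofReal_toReal hMt).symm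
  have hNb : N = ENNReal.ofReal b := (ENNReal.ofReal_toReal hNt).symm
  -- the radius balancing the two estimates of the ball integrals
  set R := (b / a) ^ (p / n) with hR
  have hR0 : 0 < R := by positivity
  have hI1 : ∫⁻ r in Ioc 0 R, ENNReal.ofReal (r ^ (α - n - 1)) * ∫⁻ y in closedBall x r, f y ≤
      ENNReal.ofReal (2 ^ n * V * a * (R ^ α / α)) := by
    calc _ ≤ ∫⁻ r in Ioc 0 R, ENNReal.ofReal (2 ^ n * V * a) * ENNReal.ofReal (r ^ (α - 1)) := by
          refine setLIntegral_mono' measurableSet_Ioc fun r hr => ?_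
          refine (mul_le_mul_right (hF1 hr.1) _).trans (le_of_eq ?_)
          rw [← hM, hMa, ← ENNReal.ofReal_mul (by have := hr.1; positivity),
            ← ENNReal.ofReal_mul (by have := hr.1; positivity), ← ENNReal.ofReal_mul (by positivity)]
          congr 1
          rw [show α - 1 = (α - n - 1) + n by ring, Real.rpow_add hr.1]; ring
      _ = _ := by
          rw [lintegral_const_mul _ (by fun_prop), lintegral_Ioc_zero_rpow hα hR0.le,
            ← ENNReal.ofReal_mul (by positivity)]
  have hI2 : ∫⁻ r in Ioi R, ENNReal.ofReal (r ^ (α - n - 1)) * ∫⁻ y in closedBall x r, f y ≤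
      ENNReal.ofReal (V ^ (1 - 1 / p) * b * (R ^ (-(n / p - α)) / (n / p - α))) := by
    calc _ ≤ ∫⁻ r in Ioi R, ENNReal.ofReal (V ^ (1 - 1 / p) * b) *
            ENNReal.ofReal (r ^ (-(n / p - α) - 1)) := by
          refine setLIntegral_mono' measurableSet_Ioi fun r hr => ?_
          have hr0 : 0 < r := hR0.trans hr
          refine (mul_le_mul_right (hF2 hr0) _).trans (le_of_eq ?_)
          rw [← hN, hNb, ← ENNReal.ofReal_mul (by positivity),
            ← ENNReal.ofReal_mul (by positivity), ← ENNReal.ofReal_mul (by positivity)]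
          congr 1
          rw [show -(n / p - α) - 1 = (α - n - 1) + (n - n / p) by ring, Real.rpow_add hr0]; ring
      _ = _ := by
          rw [lintegral_const_mul _ (by fun_prop), lintegral_Ioi_rpow_neg hδ hR0,
            ← ENNReal.ofReal_mul (by positivity)]
  have hRα : a * R ^ α = a ^ (1 - α * p / n) * b ^ (α * p / n) := by
    rw [hR, ← Real.rpow_mul (by positivity), Real.div_rpow hb.le ha.le, Real.rpow_sub ha,
      Real.rpow_one, show p / n * α = α * p / n by ring]
    ring
  have hRδ : b * R ^ (-(n / p - α)) = a ^ (1 - α * p / n) * b ^ (α * p / n) := by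
    rw [hR, ← Real.rpow_mul (by positivity), show p / n * -(n / p - α) = -(1 - α * p / n) by
      field_simp, Real.rpow_neg (by positivity), Real.div_rpow hb.le ha.le, inv_div,
      Real.rpow_sub hb, Real.rpow_one]
    field_simp
  calc rieszPot n α f x ≤ ENNReal.ofReal (n - α) * (ENNReal.ofReal (2 ^ n * V * a * (R ^ α / α)) +
        ENNReal.ofReal (V ^ (1 - 1 / p) * b * (R ^ (-(n / p - α)) / (n / p - α)))) := by
        refine hT.trans ?_
        rw [← Ioc_union_Ioi_eq_Ioi hR0.le, lintegral_union measurableSet_Ioi Ioc_disjoint_Ioi_same]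
        gcongr
    _ = ENNReal.ofReal (K * (a ^ (1 - α * p / n) * b ^ (α * p / n))) := by
        rw [← ENNReal.ofReal_add (by positivity) (by positivity), ← ENNReal.ofReal_mul hβ.le]
        congr 1
        rw [show 2 ^ n * V * a * (R ^ α / α) = 2 ^ n * V / α * (a * R ^ α) by ring,
          show V ^ (1 - 1 / p) * b * (R ^ (-(n / p - α)) / (n / p - α)) =
            V ^ (1 - 1 / p) / (n / p - α) * (b * R ^ (-(n / p - α))) by ring, hRα, hRδ, hK]
        ring
    _ = ENNReal.ofReal K * (M ^ (1 - α * p / n) * N ^ (α * p / n)) := by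
        rw [ENNReal.ofReal_mul hK0, ENNReal.ofReal_mul (p := a ^ _) (by positivity), hMa, hNb,
          ENNReal.ofReal_rpow_of_pos ha, ENNReal.ofReal_rpow_of_pos hb]
    _ ≤ _ := by
        gcongr
        rw [ENNReal.ofReal]
        exact_mod_cast le_self_add

/-- The Hardy–Littlewood–Sobolev inequality. -/
lemma hls {n : ℕ} (hn : 1 ≤ n) {α p q : ℝ} (hα : 0 < α) (hαn : α < n) (hp : 1 < p)
    (hpα : p < n / α) (hq : 1 / q = 1 / p - α / n) :
    ∃ C : NNReal, ∀ f : EuclideanSpace ℝ (Fin n) → ℝ≥0∞, Measurable f →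
      ∫⁻ y, f y ^ p < ⊤ →
      (∫⁻ x, rieszPot n α f x ^ q) ^ (1 / q) ≤ C * (∫⁻ y, f y ^ p) ^ (1 / p) := by
  obtain ⟨C₁, h₁⟩ := hedberg hn hα hαn hp hpα
  obtain ⟨C₂, h₂⟩ := strong_type n hn hp
  have hn0 : (0 : ℝ) < n := by exact_mod_cast hn
  have hp0 : 0 < p := by linarith
  have hap : α * p < n := by rwa [lt_div_iff₀ hα, mul_comm] at hpα
  have hq0 : 0 < q := by
    rw [← one_div_pos, hq, sub_pos, div_lt_div_iff₀ hn0 hp0]; linarith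
  have hqp : (1 - α * p / n) * q = p := by
    have : 1 - α * p / n = p * (1 / q) := by rw [hq]; field_simp
    rw [this]; field_simp
  have hpq : p * (1 / q) + α * p / n = 1 := by rw [hq]; field_simp; ring
  refine ⟨C₁ * C₂ ^ (1 / q), fun f hf hfin => ?_⟩
  set N := (∫⁻ y, f y ^ p) ^ (1 / p) with hN
  have hNp : ∫⁻ y, f y ^ p = N ^ p := by
    rw [hN, ← ENNReal.rpow_mul, one_div_mul_cancel hp0.ne', ENNReal.rpow_one]
  have h₁' := h₁ f hf hfin
  rw [← hN] at h₁'
  clear_value N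
  have hθ' : 0 ≤ α * p / n := by positivity
  calc (∫⁻ x, rieszPot n α f x ^ q) ^ (1 / q)
      ≤ (∫⁻ x, (C₁ * N ^ (α * p / n)) ^ q * dyMax n f x ^ p) ^ (1 / q) := by
        gcongr with x
        calc _ ≤ (C₁ * (dyMax n f x ^ (1 - α * p / n) * N ^ (α * p / n))) ^ q := by
              gcongr; exact h₁' x
          _ = _ := by
              rw [mul_left_comm, mul_comm, ENNReal.mul_rpow_of_nonneg _ _ hq0.le,
                ← ENNReal.rpow_mul, hqp]
    _ = C₁ * N ^ (α * p / n) * (∫⁻ x, dyMax n f x ^ p) ^ (1 / q) := by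
        rw [lintegral_const_mul _ ((measurable_dyMax hf).pow_const _),
          ENNReal.mul_rpow_of_nonneg _ _ (by positivity), ← ENNReal.rpow_mul,
          mul_one_div_cancel hq0.ne', ENNReal.rpow_one]
    _ ≤ C₁ * N ^ (α * p / n) * (C₂ * N ^ p) ^ (1 / q) := by
        gcongr
        rw [← hNp]; exact h₂ f hf
    _ = _ := by
        rw [ENNReal.mul_rpow_of_nonneg _ _ (by positivity), ← ENNReal.rpow_mul, ENNReal.coe_mul,
          ENNReal.coe_rpow_of_nonneg _ (by positivity)]
        have : N = N ^ (α * p / n) * N ^ (p * (1 / q)) := by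
          rw [← ENNReal.rpow_add_of_nonneg _ _ hθ' (by positivity), add_comm, hpq, ENNReal.rpow_one]
        conv_rhs => rw [this]
        ac_rfl

/-! ### Reduction of the multilinear operator to linear ones -/

lemma lintegral_pi_prod {E : Type*} [MeasureSpace E] [SigmaFinite (volume : Measure E)] (m : ℕ)
    {g : Fin m → E → ℝ≥0∞} (hg : ∀ i, Measurable (g i)) :
    ∫⁻ y : Fin m → E, ∏ i, g i (y i) = ∏ i, ∫⁻ y, g i y := by
  induction m with
  | zero => simp [volume_pi]
  | succ m ih =>
    have h := (volume_preserving_piFinSuccAbove (fun _ : Fin (m + 1) => E) 0).symm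
    rw [← h.lintegral_comp_emb (MeasurableEquiv.measurableEmbedding _), Fin.prod_univ_succ,
      ← ih fun i => hg i.succ, Measure.volume_eq_prod, ← lintegral_prod_mul]
    · congr 1; ext z
      simp [Fin.prod_univ_succ, MeasurableEquiv.piFinSuccAbove]
    · exact (hg 0).aemeasurable
    · exact (Finset.measurable_prod _ fun i _ => (hg i.succ).comp (measurable_pi_apply i)).aemeasurable

/-- Pointwise domination of `I_{α,m}` by the product of the linear fractional integrals: each
`α i - n` is negative, so `(∑ |x - y_i|)^(∑ (α i - n)) ≤ ∏ |x - y_i|^(α i - n)`. -/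
lemma enorm_multIFrac_le {n m : ℕ} (hm : 1 ≤ m) {α : Fin m → ℝ}
    (hα : ∀ i, α i < n) {f : Fin m → EuclideanSpace ℝ (Fin n) → ℝ} (hf : ∀ i, Measurable (f i))
    (x : EuclideanSpace ℝ (Fin n)) :
    ‖multIFrac n m (∑ i, α i) f x‖ₑ ≤ ∏ i, rieszPot n (α i) (fun y => ‖f i y‖ₑ) x := by
  have hexp : (∑ i, α i) - (m : ℝ) * n = ∑ i, (α i - n) := by simp
  have hneg : ∑ i, (α i - n) < 0 :=
    Finset.sum_neg (fun i _ => sub_neg.2 (hα i)) ⟨⟨0, hm⟩, Finset.mem_univ _⟩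
  refine (enorm_integral_le_lintegral_enorm _).trans ?_
  unfold rieszPot
  rw [← lintegral_pi_prod]
  · refine lintegral_mono fun y => ?_
    rw [enorm_mul, Finset.prod_mul_distrib, hexp]
    refine mul_le_mul' (le_of_eq ?_) ?_
    · simp [enorm_eq_nnnorm, nnnorm_prod]
    · have hS : 0 ≤ ∑ i, dist x (y i) := Finset.sum_nonneg fun i _ => dist_nonneg
      rcases hS.eq_or_lt with h0 | h0
      -- on the diagonal the real kernel has the junk value `0 ^ (negative) = 0`
      · rw [← h0, Real.zero_rpow hneg.ne]; simp
      · rw [Real.enorm_of_nonneg (by positivity), Real.rpow_sum_of_pos h0,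
          ENNReal.ofReal_prod_of_nonneg fun i _ => by positivity]
        refine Finset.prod_le_prod' fun i _ => ?_
        rw [← ENNReal.ofReal_rpow_of_pos h0]
        rw [← neg_sub, ENNReal.rpow_neg, ENNReal.rpow_neg, ENNReal.inv_le_inv]
        refine ENNReal.rpow_le_rpow (ENNReal.ofReal_le_ofReal ?_) (sub_pos.2 (hα i)).le
        exact Finset.single_le_sum (f := fun i => dist x (y i)) (fun i _ => dist_nonneg)
          (Finset.mem_univ i)
  · intro i
    fun_prop

theorem stmt2 (n m : ℕ) (hn : 1 ≤ n) (hm : 1 ≤ m)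
    (α p : Fin m → ℝ) (hα : ∀ i, 0 < α i ∧ α i < (n : ℝ))
    (hp : ∀ i, 1 < p i ∧ p i < (n : ℝ) / α i)
    (q : ℝ) (hq : 1 / q = (∑ i, 1 / p i) - (∑ i, α i) / (n : ℝ)) (hq1 : 1 / q < 1) :
    ∃ C > (0 : ℝ), ∀ f : Fin m → EuclideanSpace ℝ (Fin n) → ℝ,
      (∀ i, Measurable (f i)) →
      (∀ i, (∫⁻ y, ENNReal.ofReal (|f i y| ^ p i)) < ⊤) →
      (∫⁻ y, ENNReal.ofReal (|multIFrac n m (∑ i, α i) f y| ^ q)) ^ (1 / q) ≤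
        ENNReal.ofReal C * ∏ i, (∫⁻ y, ENNReal.ofReal (|f i y| ^ p i)) ^ (1 / p i) := by
  have hn0 : (0 : ℝ) < n := by exact_mod_cast hn
  -- `s i` is the reciprocal of the target exponent of the `i`-th linear operator
  set s : Fin m → ℝ := fun i => 1 / p i - α i / n with hs
  have hs0 : ∀ i, 0 < s i := by
    intro i
    have h1 := (hp i).2
    rw [lt_div_iff₀ (hα i).1] at h1
    rw [hs, sub_pos, div_lt_div_iff₀ hn0 (by linarith [(hp i).1])]
    linarith
  have hqs : 1 / q = ∑ i, s i := by
    rw [hq, hs, Finset.sum_sub_distrib, Finset.sum_div]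
  have hq0 : 0 < q := by
    rw [← one_div_pos, hqs]
    exact Finset.sum_pos (fun i _ => hs0 i) ⟨⟨0, hm⟩, Finset.mem_univ _⟩
  have hH := fun i => hls hn (q := 1 / s i) (hα i).1 (hα i).2 (hp i).1 (hp i).2 (by simp [hs])
  choose C hC using hH
  have hofReal : ∀ (a : ℝ) {r : ℝ}, 0 < r → ENNReal.ofReal (|a| ^ r) = ‖a‖ₑ ^ r := by
    intro a r hr
    rw [← ENNReal.ofReal_rpow_of_nonneg (abs_nonneg a) hr.le, Real.enorm_eq_ofReal_abs]
  have hp0 : ∀ i, 0 < p i := fun i => by linarith [(hp i).1]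
  -- adding `1` makes the constant positive even if some `C i` vanishes
  refine ⟨∏ i, (C i : ℝ) + 1, by positivity, fun f hf hfin => ?_⟩
  simp only [hofReal _ hq0, hofReal _ (hp0 _)] at hfin ⊢
  set T : Fin m → EuclideanSpace ℝ (Fin n) → ℝ≥0∞ :=
    fun i => rieszPot n (α i) (fun y => ‖f i y‖ₑ) with hT
  have hTm : ∀ i, Measurable (T i) := fun i => measurable_rieszPot _ (by fun_prop)
  have hHolder : ∫⁻ x, ∏ i, (T i x ^ (1 / s i)) ^ (s i * q) ≤
      ∏ i, (∫⁻ x, T i x ^ (1 / s i)) ^ (s i * q) := by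
    refine ENNReal.lintegral_prod_norm_pow_le _ (fun i _ => ((hTm i).pow_const _).aemeasurable) ?_
      fun i _ => (mul_pos (hs0 i) hq0).le
    rw [← Finset.sum_mul, ← hqs, one_div_mul_cancel hq0.ne']
  calc (∫⁻ x, ‖multIFrac n m (∑ i, α i) f x‖ₑ ^ q) ^ (1 / q)
      ≤ (∫⁻ x, (∏ i, T i x) ^ q) ^ (1 / q) := by
        gcongr with x
        exact enorm_multIFrac_le hm (fun i => (hα i).2) hf x
    _ = (∫⁻ x, ∏ i, (T i x ^ (1 / s i)) ^ (s i * q)) ^ (1 / q) := by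
        congr 2; ext x
        rw [← ENNReal.prod_rpow_of_nonneg hq0.le]
        refine Finset.prod_congr rfl fun i _ => ?_
        rw [← ENNReal.rpow_mul, ← mul_assoc, one_div_mul_cancel (hs0 i).ne', one_mul]
    _ ≤ (∏ i, (∫⁻ x, T i x ^ (1 / s i)) ^ (s i * q)) ^ (1 / q) := by gcongr
    _ = ∏ i, (∫⁻ x, T i x ^ (1 / s i)) ^ (1 / (1 / s i)) := by
        rw [← ENNReal.prod_rpow_of_nonneg (by positivity)]
        refine Finset.prod_congr rfl fun i _ => ?_
        rw [← ENNReal.rpow_mul, mul_assoc, mul_one_div_cancel hq0.ne', mul_one, one_div_one_div]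
    _ ≤ ∏ i, (C i : ℝ≥0∞) * (∫⁻ y, ‖f i y‖ₑ ^ p i) ^ (1 / p i) :=
        Finset.prod_le_prod' fun i _ => hC i _ (by fun_prop) (hfin i)
    _ = (∏ i, (C i : ℝ≥0∞)) * ∏ i, (∫⁻ y, ‖f i y‖ₑ ^ p i) ^ (1 / p i) := Finset.prod_mul_distrib
    _ ≤ _ := by
        gcongr
        rw [ENNReal.ofReal_add (by positivity) zero_le_one,
          ENNReal.ofReal_prod_of_nonneg fun i _ => by positivity]
        simp
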